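/- arXiv:cs/0207072 — 2 statements merged into one kernel-verified Lean document; each statement's English description precedes it below -/
import Mathlib

section
/- Let ψ be a propositional formula over the pairwise disjoint atom sets V, X, Y, let u be a fresh atom, ab ∈ Ab, and φ = ψ ∨ u. Let T1 = {Y, u : φ, u ↔ ab} and T2 = {X, Y, u : T1, u ↔ ¬ab}. Then T2 ⊨ u if and only if for every truth assignment ν to V, the QBF ∃X ∀Y ¬ψ[ν(V)] is true (equivalently, ∀X ∃Y ψ[ν(V)] is false). -/
/-!
STATEMENT 7: the nested NAT `T₂ = {X, Y, u : T₁, u ↔ ¬ab}` with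
`T₁ = {Y, u : ψ ∨ u, u ↔ ab}` satisfies: `T₂ ⊨ u` iff for every assignment ν to the
parameters `V`, the QBF `∃X ∀Y ¬ψ[ν(V)]` is true.
-/

namespace NestedCirc

universe u
variable {α : Type u}

/-- Propositional formulas over atoms `α`. -/
inductive PForm (α : Type u) : Type u where
  | tru : PForm α
  | fls : PForm α
  | atom : α → PForm α
  | neg : PForm α → PForm α
  | conj : PForm α → PForm α → PForm α
  | disj : PForm α → PForm α → PForm α

namespace PForm

/-- Satisfaction of a propositional formula in an interpretation (set of true atoms). -/
def sat : PForm α → Set α → Prop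
  | tru, _ => True
  | fls, _ => False
  | atom a, M => a ∈ M
  | neg φ, M => ¬ φ.sat M
  | conj φ ψ, M => φ.sat M ∧ ψ.sat M
  | disj φ ψ, M => φ.sat M ∨ ψ.sat M

/-- Implication `φ → ψ`. -/
def imp (φ ψ : PForm α) : PForm α := disj (neg φ) ψ

/-- Equivalence `φ ↔ ψ`. -/
def iffF (φ ψ : PForm α) : PForm α := conj (imp φ ψ) (imp ψ φ)

/-- The atoms occurring in a formula. -/
def atoms : PForm α → Set α
  | tru => ∅
  | fls => ∅
  | atom a => {a}
  | neg φ => φ.atoms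
  | conj φ ψ => φ.atoms ∪ ψ.atoms
  | disj φ ψ => φ.atoms ∪ ψ.atoms

/-- Conjunction of a list of formulas. -/
def conjList (l : List (PForm α)) : PForm α := l.foldr conj tru

end PForm

/-- `M ≤_{P;Z} M'` : `M` agrees with `M'` on the fixed atoms `(P ∪ Z)ᶜ`
and is smaller or equal on the minimized atoms `P`. -/
def lePZ (P Z M M' : Set α) : Prop :=
  M ∩ P ⊆ M' ∩ P ∧ M ∩ (P ∪ Z)ᶜ = M' ∩ (P ∪ Z)ᶜ

/-- `M <_{P;Z} M'` (strict preference). -/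
def ltPZ (P Z M M' : Set α) : Prop := lePZ P Z M M' ∧ ¬ lePZ P Z M' M

/-- A block `{C : B₁,…,Bₘ}` of a nested abnormality theory: the described atoms `C`,
the members that are propositional formulas, and the members that are blocks. -/
inductive Block (α : Type u) : Type u where
  | mk : Set α → List (PForm α) → List (Block α) → Block α

/-- Satisfaction of a block: `M ⊨ {C : B₁,…,Bₘ}` iff some interpretation `M*` agreeing
with `M` outside `Ab` satisfies every member and is `(Ab;C)`-minimal doing so. -/
def Block.sat (Ab : Set α) : Block α → Set α → Prop
  | .mk C fs bs, M =>
      ∃ Ms : Set α, Ms ∩ Abᶜ = M ∩ Abᶜ ∧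
        ((∀ f ∈ fs, f.sat Ms) ∧ ∀ b ∈ bs, Block.sat Ab b Ms) ∧
        ∀ N : Set α, ((∀ f ∈ fs, f.sat N) ∧ ∀ b ∈ bs, Block.sat Ab b N) → ¬ ltPZ Ab C N Ms

/-- A nested abnormality theory (NAT): a finite collection of blocks. -/
abbrev NAT (α : Type u) := List (Block α)

/-- `M ⊨ T` iff `M` satisfies every block of `T`. -/
def NAT.sat (Ab : Set α) (T : NAT α) (M : Set α) : Prop := ∀ B ∈ T, Block.sat Ab B M

/-!
In both blocks the formula tying `u` to `ab` makes `ab` the only abnormality that matters: it is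
true exactly when a condition `A` holds, where `A` and the remaining requirement `R` do not look at
`Ab`. Minimizing `Ab` then means avoiding `A` if `R` can be kept by changing the described atoms.

For `T₁` we have `A = u`: the block keeps `u` false and `ψ` true, except where no change of `Y`
makes `ψ` true, and there it makes `u` true. For `T₂` we have `A = ¬u` and the preference is
reversed: a model with `u` false survives only if no change of `X` leads to a place where `∀Y ¬ψ`.
-/

/-- The interpretations `M` and `N` agree on every atom outside `S`. -/
def EqOff (S M N : Set α) : Prop := ∀ a ∉ S, (a ∈ M ↔ a ∈ N)

/-- The property `P` of interpretations does not depend on the truth values of the atoms in `S`. -/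
def Ignores (S : Set α) (P : Set α → Prop) : Prop := ∀ ⦃M N⦄, EqOff S M N → (P M ↔ P N)

/-- Propositional quantification `∃S P`: the truth values that `M` gives to the atoms of `S` can be
changed so that `P` holds. The universal quantifier in `∀S ¬P` is written `¬ ExistsOver S P`. -/
def ExistsOver (S : Set α) (P : Set α → Prop) (M : Set α) : Prop := ∃ N, EqOff S N M ∧ P N

section EqOff

variable {S T L M N : Set α}

theorem EqOff.refl (S M : Set α) : EqOff S M M := fun _ _ => Iff.rfl

theorem EqOff.symm (h : EqOff S M N) : EqOff S N M := fun a ha => (h a ha).symm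

theorem EqOff.trans (h₁ : EqOff S L M) (h₂ : EqOff S M N) : EqOff S L N :=
  fun a ha => (h₁ a ha).trans (h₂ a ha)

theorem EqOff.mono (hST : S ⊆ T) (h : EqOff S M N) : EqOff T M N :=
  fun a ha => h a fun haS => ha (hST haS)

theorem eqOff_iff_inter_compl_eq : EqOff S M N ↔ M ∩ Sᶜ = N ∩ Sᶜ := by
  simp only [EqOff, Set.ext_iff, Set.mem_inter_iff, Set.mem_compl_iff, and_congr_left_iff]

theorem eqOff_ite (S M N : Set α) : EqOff S (S.ite N M) M := by
  intro a ha
  simp [Set.ite, ha]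

theorem eqOff_diff (M S : Set α) : EqOff S (M \ S) M := by
  intro a ha
  simp [ha]

theorem eqOff_insert {a : α} (ha : a ∈ S) (M : Set α) : EqOff S (insert a M) M := by
  intro b hb
  simp [ne_of_mem_of_not_mem ha hb |>.symm]

theorem EqOff.exists_intermediate (h : EqOff (S ∪ T) M N) : ∃ L, EqOff S M L ∧ EqOff T L N := by
  refine ⟨T.ite M N, fun a haS => ?_, eqOff_ite T N M⟩
  by_cases haT : a ∈ T
  · simp [Set.ite, haT]
  · simpa [Set.ite, haT] using h a (by simp [haS, haT])

end EqOff

section Ignores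

variable {S T : Set α} {P Q : Set α → Prop} {M : Set α}

theorem Ignores.or (hP : Ignores S P) (hQ : Ignores S Q) : Ignores S fun M => P M ∨ Q M :=
  fun _ _ h => or_congr (hP h) (hQ h)

theorem Ignores.not (hP : Ignores S P) : Ignores S fun M => ¬ P M := fun _ _ h => not_congr (hP h)

theorem Ignores.union (hS : Ignores S P) (hT : Ignores T P) : Ignores (S ∪ T) P := by
  intro M N h
  obtain ⟨L, hML, hLN⟩ := h.exists_intermediate
  exact (hS hML).trans (hT hLN)

theorem ignores_mem {a : α} (ha : a ∉ S) : Ignores S fun M => a ∈ M := fun _ _ h => h a ha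

theorem ignores_existsOver (S : Set α) (P : Set α → Prop) : Ignores S (ExistsOver S P) :=
  fun _ _ hMN => exists_congr fun _ =>
    and_congr_left' ⟨fun hL => hL.trans hMN, fun hL => hL.trans hMN.symm⟩

theorem existsOver_union_iff (hP : Ignores S P) : ExistsOver (S ∪ T) P M ↔ ExistsOver T P M := by
  constructor
  · rintro ⟨N, hNM, hPN⟩
    obtain ⟨L, hNL, hLM⟩ := hNM.exists_intermediate
    exact ⟨L, hLM, (hP hNL).1 hPN⟩
  · rintro ⟨N, hNM, hPN⟩
    exact ⟨N, hNM.mono Set.subset_union_right, hPN⟩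

theorem Ignores.existsOver (hP : Ignores S P) (T : Set α) : Ignores S (ExistsOver T P) := by
  intro M N h
  calc
    ExistsOver T P M ↔ ExistsOver (S ∪ T) P M := (existsOver_union_iff hP).symm
    _ ↔ ExistsOver (S ∪ T) P N := ignores_existsOver _ P (h.mono Set.subset_union_left)
    _ ↔ ExistsOver T P N := existsOver_union_iff hP

theorem existsOver_and_iff (hP : Ignores S P) (hQ : ∀ M, ExistsOver S Q M) (hST : S ⊆ T) :
    ExistsOver T (fun N => Q N ∧ P N) M ↔ ExistsOver T P M := by
  constructor
  · rintro ⟨N, hNM, -, hPN⟩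
    exact ⟨N, hNM, hPN⟩
  · rintro ⟨N, hNM, hPN⟩
    obtain ⟨L, hLN, hQL⟩ := hQ N
    exact ⟨L, (hLN.mono hST).trans hNM, hQL, (hP hLN).2 hPN⟩

theorem existsOver_mem {a : α} (ha : a ∈ S) (M : Set α) : ExistsOver S (fun N => a ∈ N) M :=
  ⟨insert a M, eqOff_insert ha M, Set.mem_insert a M⟩

theorem existsOver_notMem {a : α} (ha : a ∈ S) (M : Set α) : ExistsOver S (fun N => a ∉ N) M :=
  ⟨M \ S, eqOff_diff M S, fun h => h.2 ha⟩

theorem existsOver_iff_exists_ite : ExistsOver S P M ↔ ∃ I, P (S.ite I M) := by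
  constructor
  · rintro ⟨N, hNM, hPN⟩
    have hN : S.ite N M = N := by
      ext a
      by_cases ha : a ∈ S
      · simp [Set.ite, ha]
      · simp [Set.ite, ha, hNM a ha]
    exact ⟨N, by rwa [hN]⟩
  · rintro ⟨I, hI⟩
    exact ⟨S.ite I M, eqOff_ite S M I, hI⟩

end Ignores

namespace PForm

theorem sat_congr {φ : PForm α} {M N : Set α} (h : ∀ a ∈ φ.atoms, (a ∈ M ↔ a ∈ N)) :
    φ.sat M ↔ φ.sat N := by
  induction φ with
  | tru | fls => exact Iff.rfl
  | atom a => exact h a rfl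
  | neg φ ih => exact not_congr (ih h)
  | conj φ χ ihφ ihχ =>
    exact and_congr (ihφ fun a ha => h a (Or.inl ha)) (ihχ fun a ha => h a (Or.inr ha))
  | disj φ χ ihφ ihχ =>
    exact or_congr (ihφ fun a ha => h a (Or.inl ha)) (ihχ fun a ha => h a (Or.inr ha))

theorem ignores_sat {φ : PForm α} {S : Set α} (h : Disjoint φ.atoms S) : Ignores S φ.sat :=
  fun _ _ hMN => sat_congr fun a ha => hMN a (Set.disjoint_left.1 h ha)

theorem sat_iffF {φ χ : PForm α} {M : Set α} : (iffF φ χ).sat M ↔ (φ.sat M ↔ χ.sat M) := by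
  simp only [iffF, imp, sat]
  tauto

end PForm

theorem lePZ_iff {P Z M N : Set α} :
    lePZ P Z M N ↔ (∀ a ∈ P, a ∈ M → a ∈ N) ∧ EqOff (P ∪ Z) M N := by
  rw [lePZ, eqOff_iff_inter_compl_eq, Set.subset_inter_iff, and_iff_left Set.inter_subset_right]
  simp only [Set.subset_def, Set.mem_inter_iff, and_imp]
  exact and_congr_left' (forall_congr' fun _ => forall_comm)

theorem ltPZ_iff {P Z M N : Set α} :
    ltPZ P Z M N ↔ lePZ P Z M N ∧ ∃ a ∈ P, a ∈ N ∧ a ∉ M := by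
  refine and_congr_right fun hle => ?_
  simp [lePZ_iff, (lePZ_iff.1 hle).2.symm]

namespace Block

variable {Ab : Set α}

theorem ignores_sat (B : Block α) : Ignores Ab (B.sat Ab) := by
  obtain ⟨C, fs, bs⟩ := B
  intro M N h
  simp only [Block.sat, eqOff_iff_inter_compl_eq.1 h]

theorem sat_iff_of_single_abnormality {C : Set α} {fs : List (PForm α)} {bs : List (Block α)}
    {ab : α} {A R : Set α → Prop} (hab : ab ∈ Ab) (hA : Ignores Ab A) (hR : Ignores Ab R)
    (hmembers : ∀ N, ((∀ f ∈ fs, f.sat N) ∧ ∀ b ∈ bs, Block.sat Ab b N) ↔ (ab ∈ N ↔ A N) ∧ R N)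
    (M : Set α) :
    (Block.mk C fs bs).sat Ab M ↔
      R M ∧ (A M → ¬ ExistsOver (Ab ∪ C) (fun N => ¬ A N ∧ R N) M) := by
  simp only [Block.sat, hmembers, ← eqOff_iff_inter_compl_eq]
  constructor
  · rintro ⟨Ms, hMs, ⟨habMs, hRMs⟩, hmin⟩
    refine ⟨(hR hMs).1 hRMs, fun hAM => ?_⟩
    rintro ⟨N, hNM, hAN, hRN⟩
    have hN : EqOff Ab (N \ Ab) N := eqOff_diff N Ab
    have hNMs : EqOff (Ab ∪ C) (N \ Ab) Ms :=
      ((hN.mono Set.subset_union_left).trans hNM).trans (hMs.symm.mono Set.subset_union_left)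
    refine hmin (N \ Ab) ⟨?_, (hR hN).2 hRN⟩ (ltPZ_iff.2 ⟨lePZ_iff.2 ⟨?_, hNMs⟩, ?_⟩)
    · simp [hab, hA hN, hAN]
    · exact fun a ha haN => absurd ha haN.2
    · exact ⟨ab, hab, habMs.2 ((hA hMs).2 hAM), fun h => h.2 hab⟩
  · rintro ⟨hRM, hmin⟩
    let Ms : Set α := M \ Ab ∪ {a | a = ab ∧ A M}
    have hMs : EqOff Ab Ms M := by
      intro a ha
      simp [Ms, ha, (ne_of_mem_of_not_mem hab ha).symm]
    have habMs : ab ∈ Ms ↔ A M := by simp [Ms, hab]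
    refine ⟨Ms, hMs, ⟨habMs.trans (hA hMs).symm, (hR hMs).2 hRM⟩, fun N ⟨habN, hRN⟩ hlt => ?_⟩
    obtain ⟨hle, a, haAb, haMs, haN⟩ := ltPZ_iff.1 hlt
    obtain ⟨rfl, hAM⟩ : a = ab ∧ A M := haMs.resolve_left fun h => h.2 haAb
    have hNM : EqOff (Ab ∪ C) N M :=
      (lePZ_iff.1 hle).2.trans (hMs.mono Set.subset_union_left)
    exact hmin hAM ⟨N, hNM, fun hAN => haN (habN.2 hAN), hRN⟩

end Block

/-- The block `T₁ = {Y, u : ψ ∨ u, u ↔ ab}`. -/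
def blockT1 (Y : Set α) (u ab : α) (ψ : PForm α) : Block α :=
  Block.mk (Y ∪ {u}) [ψ.disj (.atom u), PForm.iffF (.atom u) (.atom ab)] []

/-- The block `T₂ = {X, Y, u : T₁, u ↔ ¬ab}`. -/
def blockT2 (X Y : Set α) (u ab : α) (ψ : PForm α) : Block α :=
  Block.mk (X ∪ Y ∪ {u}) [PForm.iffF (.atom u) (.neg (.atom ab))] [blockT1 Y u ab ψ]

section Blocks

variable {Ab X Y : Set α} {u ab : α} {ψ : PForm α} {M : Set α}

theorem sat_blockT1_iff (hab : ab ∈ Ab) (huAb : u ∉ Ab) (hψAb : Disjoint ψ.atoms Ab)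
    (huψ : u ∉ ψ.atoms) :
    (blockT1 Y u ab ψ).sat Ab M ↔
      (ψ.sat M ∨ u ∈ M) ∧ (u ∈ M → ¬ ExistsOver Y ψ.sat M) := by
  have hψu : Ignores {u} ψ.sat := PForm.ignores_sat (Set.disjoint_singleton_right.2 huψ)
  have hψ : Ignores (Ab ∪ {u}) ψ.sat := (PForm.ignores_sat hψAb).union hψu
  have hreach : ExistsOver (Ab ∪ (Y ∪ {u})) (fun N => u ∉ N ∧ (ψ.sat N ∨ u ∈ N)) M ↔
      ExistsOver Y ψ.sat M := by
    calc
      _ ↔ ExistsOver (Ab ∪ (Y ∪ {u})) (fun N => u ∉ N ∧ ψ.sat N) M := by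
        simp only [and_or_left, not_and_self_iff, or_false]
      _ ↔ ExistsOver (Ab ∪ (Y ∪ {u})) ψ.sat M :=
        existsOver_and_iff hψu (existsOver_notMem rfl) (by grind)
      _ ↔ ExistsOver Y ψ.sat M := by
        rw [Set.union_comm Y, ← Set.union_assoc, existsOver_union_iff hψ]
  rw [← hreach]
  refine Block.sat_iff_of_single_abnormality hab (ignores_mem huAb)
    ((PForm.ignores_sat hψAb).or (ignores_mem huAb)) (fun N => ?_) M
  simp only [List.forall_mem_cons, List.not_mem_nil, PForm.sat_iffF, PForm.sat]
  tauto

theorem sat_blockT2_iff (hab : ab ∈ Ab) (huAb : u ∉ Ab) :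
    (blockT2 X Y u ab ψ).sat Ab M ↔
      (blockT1 Y u ab ψ).sat Ab M ∧ (u ∉ M →
        ¬ ExistsOver (Ab ∪ (X ∪ Y ∪ {u})) (fun N => u ∈ N ∧ (blockT1 Y u ab ψ).sat Ab N) M) := by
  rw [blockT2, Block.sat_iff_of_single_abnormality (A := fun N => u ∉ N) hab (ignores_mem huAb).not
    (Block.ignores_sat (blockT1 Y u ab ψ)) fun N => ?_]
  · simp only [not_not]
  · simp only [List.forall_mem_singleton, PForm.sat_iffF, PForm.sat]
    tauto

theorem sat_blockT2_iff_of_notMem (hab : ab ∈ Ab) (huAb : u ∉ Ab) (hψAb : Disjoint ψ.atoms Ab)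
    (huψ : u ∉ ψ.atoms) (huM : u ∉ M) :
    (blockT2 X Y u ab ψ).sat Ab M ↔
      ψ.sat M ∧ ¬ ExistsOver X (fun N => ¬ ExistsOver Y ψ.sat N) M := by
  have hψu : Ignores {u} ψ.sat := PForm.ignores_sat (Set.disjoint_singleton_right.2 huψ)
  have hqbf_u : Ignores {u} fun N => ¬ ExistsOver Y ψ.sat N := (hψu.existsOver Y).not
  have hqbf : Ignores (Ab ∪ Y ∪ {u}) fun N => ¬ ExistsOver Y ψ.sat N :=
    (((PForm.ignores_sat hψAb).existsOver Y).not.union (ignores_existsOver Y ψ.sat).not).union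
      hqbf_u
  have hreach : ExistsOver (Ab ∪ (X ∪ Y ∪ {u}))
      (fun N => u ∈ N ∧ (blockT1 Y u ab ψ).sat Ab N) M ↔
        ExistsOver X (fun N => ¬ ExistsOver Y ψ.sat N) M := by
    calc
      _ ↔ ExistsOver (Ab ∪ (X ∪ Y ∪ {u})) (fun N => u ∈ N ∧ ¬ ExistsOver Y ψ.sat N) M := by
        simp only [sat_blockT1_iff hab huAb hψAb huψ]
        grind
      _ ↔ ExistsOver (Ab ∪ (X ∪ Y ∪ {u})) (fun N => ¬ ExistsOver Y ψ.sat N) M :=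
        existsOver_and_iff hqbf_u (existsOver_mem rfl) (by grind)
      _ ↔ ExistsOver X (fun N => ¬ ExistsOver Y ψ.sat N) M := by
        rw [show Ab ∪ (X ∪ Y ∪ {u}) = Ab ∪ Y ∪ {u} ∪ X by grind, existsOver_union_iff hqbf]
  rw [sat_blockT2_iff hab huAb, hreach, sat_blockT1_iff hab huAb hψAb huψ]
  simp [huM]

theorem blockT2_entails_iff (hab : ab ∈ Ab) (huAb : u ∉ Ab) (hψAb : Disjoint ψ.atoms Ab)
    (huψ : u ∉ ψ.atoms) :
    (∀ M, (blockT2 X Y u ab ψ).sat Ab M → u ∈ M) ↔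
      ∀ M, ExistsOver X (fun N => ¬ ExistsOver Y ψ.sat N) M := by
  have hsat {M : Set α} (huM : u ∉ M) :=
    sat_blockT2_iff_of_notMem (X := X) (Y := Y) hab huAb hψAb huψ huM
  constructor
  · intro hentails M
    by_contra hM
    have hYM : ExistsOver Y ψ.sat M := not_not.1 fun h => hM ⟨M, EqOff.refl X M, h⟩
    have hψu : Ignores {u} ψ.sat := PForm.ignores_sat (Set.disjoint_singleton_right.2 huψ)
    obtain ⟨N, hNM, huN, hψN⟩ : ExistsOver ({u} ∪ Y) (fun N => u ∉ N ∧ ψ.sat N) M :=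
      (existsOver_and_iff hψu (existsOver_notMem rfl) Set.subset_union_left).2
        ((existsOver_union_iff hψu).2 hYM)
    have hqbf : Ignores ({u} ∪ Y) (ExistsOver X fun N => ¬ ExistsOver Y ψ.sat N) :=
      ((hψu.existsOver Y).union (ignores_existsOver Y ψ.sat)).not.existsOver X
    exact huN (hentails N ((hsat huN).2 ⟨hψN, fun h => hM ((hqbf hNM).1 h)⟩))
  · intro hqbf M hM
    by_contra huM
    exact ((hsat huM).1 hM).2 (hqbf M)

end Blocks

theorem existsOver_not_existsOver_sat_iff {V X Y : Set α} {ψ : PForm α} (hVX : Disjoint V X)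
    (hVY : Disjoint V Y) (hXY : Disjoint X Y) (hatoms : ψ.atoms ⊆ V ∪ X ∪ Y) (IV : Set α) :
    ExistsOver X (fun N => ¬ ExistsOver Y ψ.sat N) IV ↔
      ∃ IX : Set α, ∀ IY : Set α, ¬ ψ.sat ((IV ∩ V) ∪ (IX ∩ X) ∪ (IY ∩ Y)) := by
  simp only [existsOver_iff_exists_ite, not_exists]
  refine exists_congr fun IX => forall_congr' fun IY => not_congr (PForm.sat_congr fun a ha => ?_)
  have haVXY := hatoms ha
  rw [Set.disjoint_left] at hVX hVY hXY
  grind [Set.ite]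

theorem nested_nat_T2_general {Ab V X Y : Set α} {u ab : α} {ψ : PForm α}
    (hVX : Disjoint V X) (hVY : Disjoint V Y) (hXY : Disjoint X Y)
    (huψ : u ∉ ψ.atoms) (huAb : u ∉ Ab) (hab : ab ∈ Ab) (hψAb : Disjoint ψ.atoms Ab)
    (hatoms : ψ.atoms ⊆ V ∪ X ∪ Y) :
    (∀ M : Set α, NAT.sat Ab [blockT2 X Y u ab ψ] M → u ∈ M) ↔
      ∀ IV : Set α, ∃ IX : Set α, ∀ IY : Set α,
        ¬ ψ.sat ((IV ∩ V) ∪ (IX ∩ X) ∪ (IY ∩ Y)) := by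
  simp only [NAT.sat, List.forall_mem_singleton, blockT2_entails_iff hab huAb hψAb huψ,
    existsOver_not_existsOver_sat_iff hVX hVY hXY hatoms]

/-- Let `ψ` be propositional over the pairwise disjoint atom sets
`V`, `X`, `Y`, let `u` be a fresh atom, `ab ∈ Ab`, and `φ = ψ ∨ u`.  Let
`T₁ = {Y, u : φ, u ↔ ab}` and `T₂ = {X, Y, u : T₁, u ↔ ¬ab}`.  Then `T₂ ⊨ u` if and
only if for every truth assignment `ν` to `V`, the QBF `∃X ∀Y ¬ψ[ν(V)]` is true
(equivalently, `∀X ∃Y ψ[ν(V)]` is false). -/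
theorem nested_nat_T2 (Ab V X Y : Set α) (u ab : α) (ψ : PForm α)
    (hVX : Disjoint V X) (hVY : Disjoint V Y) (hXY : Disjoint X Y)
    (hu : u ∉ V ∪ X ∪ Y) (hab : ab ∈ Ab)
    (hAb : Disjoint (V ∪ X ∪ Y ∪ {u}) Ab) (hAt : V ∪ X ∪ Y ∪ {u} ∪ Ab = Set.univ)
    (hatoms : ψ.atoms ⊆ V ∪ X ∪ Y) :
    (∀ M : Set α,
        NAT.sat Ab [Block.mk (X ∪ Y ∪ {u})
          [PForm.iffF (.atom u) (.neg (.atom ab))]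
          [Block.mk (Y ∪ {u}) [ψ.disj (.atom u), PForm.iffF (.atom u) (.atom ab)] []]] M →
        u ∈ M) ↔
      (∀ IV : Set α, ∃ IX : Set α, ∀ IY : Set α,
        ¬ ψ.sat ((IV ∩ V) ∪ (IX ∩ X) ∪ (IY ∩ Y))) := by
  obtain ⟨hVXYAb, huAb⟩ := Set.disjoint_union_left.1 hAb
  exact nested_nat_T2_general hVX hVY hXY (fun h => hu (hatoms h))
    (Set.disjoint_singleton_left.1 huAb) hab (hVXYAb.mono_left hatoms) hatoms

end NestedCirc
end

section
/- Prioritized circumscription is expressed by nested circumscription: let φ be a propositional formula, P1,…,Pn and Z pairwise disjoint sets of atoms, and define ψ1 = CIRC(φ; P1; Z∪P2∪⋯∪Pn) and ψ_i = CIRC(ψ_{i-1}; P_i; Z∪P_{i+1}∪⋯∪P_n) for i = 2,…,n. Then an interpretation M is a model of ψ_n if and only if M is a model of φ that is minimal with respect to the prioritized preference relation ≤_{P1,…,Pn;Z}, i.e., no model M' of φ satisfies M' <_{P1,…,Pn;Z} M. -/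
/-!
STATEMENT 16: prioritized circumscription is expressed by nested circumscription:
the models of `ψₙ` are exactly the models of `φ` minimal w.r.t. the prioritized
preference relation `≤_{P1,…,Pn;Z}`.
-/

namespace NestedCirc

universe u
variable {α : Type u}

/-- The models of the circumscription of a class `S` of models (the models of some
formula) minimizing `P` with `Z` floating: the `(P;Z)`-minimal elements of `S`. -/
def circMods (S : Set (Set α)) (P Z : Set α) : Set (Set α) :=
  {M ∈ S | ∀ N ∈ S, ¬ ltPZ P Z N M}

/-- The atoms floating at stage `i`: `Z ∪ P_{i+1} ∪ ⋯ ∪ P_n`. -/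
def floatAfter (P : ℕ → Set α) (Z : Set α) (n i : ℕ) : Set α :=
  Z ∪ ⋃ j ∈ Set.Ioc i n, P j

/-- The models of `ψᵢ`, where `ψ₁ = CIRC(φ; P₁; Z∪P₂∪⋯∪Pₙ)` and
`ψᵢ = CIRC(ψ_{i-1}; Pᵢ; Z∪P_{i+1}∪⋯∪Pₙ)` for `i = 2,…,n`. -/
def nestedPrioMods (φ : PForm α) (P : ℕ → Set α) (Z : Set α) (n : ℕ) :
    ℕ → Set (Set α)
  | 0 => {M | φ.sat M}
  | i + 1 => circMods (nestedPrioMods φ P Z n i) (P (i + 1)) (floatAfter P Z n (i + 1))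

/-- The prioritized preference relation `M ≤_{P1,…,Pn;Z} M'`: `M` and `M'` agree on the
fixed letters and, lexicographically, either `M` and `M'` coincide on all `Pᵢ` or `M`
is strictly smaller than `M'` on the first `Pᵢ` on which they differ. -/
def lePrio (P : ℕ → Set α) (Z : Set α) (n : ℕ) (M M' : Set α) : Prop :=
  M ∩ (Z ∪ ⋃ j ∈ Set.Icc 1 n, P j)ᶜ = M' ∩ (Z ∪ ⋃ j ∈ Set.Icc 1 n, P j)ᶜ ∧
  ∀ i ∈ Set.Icc 1 n,
    (∀ j ∈ Set.Icc 1 n, j < i → M ∩ P j = M' ∩ P j) → M ∩ P i ⊆ M' ∩ P i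

/-- `M <_{P1,…,Pn;Z} M'` (strict prioritized preference). -/
def ltPrio (P : ℕ → Set α) (Z : Set α) (n : ℕ) (M M' : Set α) : Prop :=
  lePrio P Z n M M' ∧ ¬ lePrio P Z n M' M

/-! Write `N <ᵢ M` for the preference `ltPZ` used at stage `i`. By disjointness `N <ᵢ M` says that
`N` and `M` agree on the fixed atoms and on `P₁, …, Pᵢ₋₁`, while `N` is strictly smaller on `Pᵢ`;
hence the strict prioritized preference is the union of `<₁, …, <ₙ`. Moreover, if `N <ⱼ M` and
`i < j`, then `N` and `M` look the same to `<ᵢ`. So a model surviving the stages before `j` can only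
be beaten at stage `j` by models that survive these stages too, and minimizing stage by stage
is the same as minimizing with respect to all the `<ᵢ` at once. -/

section IterMin

variable {β : Type*}

/-- Iterated minimization: starting from `S`, stage `i + 1` keeps those survivors of stage `i` that
are minimal among them for `r (i + 1)`. Stages are numbered from `1`, like the formulas
`ψᵢ`, so minimization starts with `r 1`. -/
def iterMin (r : ℕ → β → β → Prop) (S : Set β) : ℕ → Set β
  | 0 => S
  | i + 1 => {x ∈ iterMin r S i | ∀ y ∈ iterMin r S i, ¬ r (i + 1) y x}

theorem mem_iterMin_iff {r : ℕ → β → β → Prop} {S : Set β} {n : ℕ}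
    (hr : ∀ i ∈ Set.Icc 1 n, ∀ j ∈ Set.Icc 1 n, i < j → ∀ x y z, r i x y → r j y z → r i x z)
    {x : β} : x ∈ iterMin r S n ↔ x ∈ S ∧ ∀ i ∈ Set.Icc 1 n, ∀ y ∈ S, ¬ r i y x := by
  induction n generalizing x with
  | zero => simp [iterMin]
  | succ n ih =>
    have hsub : Set.Icc 1 n ⊆ Set.Icc 1 (n + 1) := Set.Icc_subset_Icc_right n.le_succ
    have hlast : n + 1 ∈ Set.Icc 1 (n + 1) := ⟨n.succ_pos, le_rfl⟩
    have mem_iff {x : β} := ih (fun i hi j hj => hr i (hsub hi) j (hsub hj)) (x := x)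
    constructor
    · rintro ⟨hx, hmin⟩
      obtain ⟨hxS, hxmin⟩ := mem_iff.1 hx
      refine ⟨hxS, fun i hi y hy hyx => ?_⟩
      obtain hin | rfl := Nat.le_add_one_iff.1 hi.2
      · exact hxmin i ⟨hi.1, hin⟩ y hy hyx
      · have hy_survives : y ∈ iterMin r S n := mem_iff.2 ⟨hy, fun i hi z hz hzy =>
          hxmin i hi z hz (hr i (hsub hi) _ hlast (Nat.lt_succ_of_le hi.2) z y x hzy hyx)⟩
        exact hmin y hy_survives hyx
    · rintro ⟨hxS, hxmin⟩
      exact ⟨mem_iff.2 ⟨hxS, fun i hi => hxmin i (hsub hi)⟩,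
        fun y hy => hxmin _ hlast y (mem_iff.1 hy).1⟩

end IterMin

section Preference

variable {P : ℕ → Set α} {Z M N : Set α} {n i : ℕ}

/-- `N` and `M` agree on the fixed atoms and on every `Pⱼ` of higher priority than `Pᵢ`,
that is, with `j < i`. -/
def AgreeBefore (P : ℕ → Set α) (Z : Set α) (n i : ℕ) (N M : Set α) : Prop :=
  N ∩ (Z ∪ ⋃ j ∈ Set.Icc 1 n, P j)ᶜ = M ∩ (Z ∪ ⋃ j ∈ Set.Icc 1 n, P j)ᶜ ∧
    ∀ j ∈ Set.Icc 1 n, j < i → N ∩ P j = M ∩ P j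

theorem AgreeBefore.symm (h : AgreeBefore P Z n i N M) : AgreeBefore P Z n i M N :=
  ⟨h.1.symm, fun j hj hji => (h.2 j hj hji).symm⟩

theorem AgreeBefore.trans {L : Set α} (hLN : AgreeBefore P Z n i L N)
    (hNM : AgreeBefore P Z n i N M) : AgreeBefore P Z n i L M :=
  ⟨hLN.1.trans hNM.1, fun j hj hji => (hLN.2 j hj hji).trans (hNM.2 j hj hji)⟩

theorem AgreeBefore.mono {k : ℕ} (hik : i ≤ k) (h : AgreeBefore P Z n k N M) :
    AgreeBefore P Z n i N M :=
  ⟨h.1, fun j hj hji => h.2 j hj (hji.trans_le hik)⟩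

theorem inter_eq_inter_iff_forall_mem {A : Set α} :
    N ∩ A = M ∩ A ↔ ∀ x ∈ A, (x ∈ N ↔ x ∈ M) := by
  simp only [Set.ext_iff, Set.mem_inter_iff, and_congr_left_iff]

theorem compl_union_floatAfter (hPZ : ∀ i ∈ Set.Icc 1 n, Disjoint (P i) Z)
    (hPP : (Set.Icc 1 n).PairwiseDisjoint P) (hi : i ∈ Set.Icc 1 n) :
    (P i ∪ floatAfter P Z n i)ᶜ =
      (Z ∪ ⋃ j ∈ Set.Icc 1 n, P j)ᶜ ∪ ⋃ j ∈ Set.Ico 1 i, P j := by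
  ext x
  have hQ : x ∈ (Z ∪ ⋃ j ∈ Set.Icc 1 n, P j)ᶜ ↔ x ∉ Z ∧ ∀ j ∈ Set.Icc 1 n, x ∉ P j := by simp
  have notMem_Z (j) (hj : j ∈ Set.Icc 1 n) (hxj : x ∈ P j) : x ∉ Z :=
    Set.disjoint_left.1 (hPZ j hj) hxj
  have index_unique (j) (hj : j ∈ Set.Icc 1 n) (hxj : x ∈ P j) (k) (hk : k ∈ Set.Icc 1 n)
      (hxk : x ∈ P k) : j = k := hPP.elim_set hj hk x hxj hxk
  rw [Set.mem_union, hQ]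
  simp only [floatAfter, Set.mem_compl_iff, Set.mem_union, Set.mem_iUnion, Set.mem_Icc,
    Set.mem_Ioc, Set.mem_Ico] at hi notMem_Z index_unique ⊢
  grind

theorem agreeBefore_iff_inter_compl_eq (hPZ : ∀ i ∈ Set.Icc 1 n, Disjoint (P i) Z)
    (hPP : (Set.Icc 1 n).PairwiseDisjoint P) (hi : i ∈ Set.Icc 1 n) :
    AgreeBefore P Z n i N M ↔
      N ∩ (P i ∪ floatAfter P Z n i)ᶜ = M ∩ (P i ∪ floatAfter P Z n i)ᶜ := by
  rw [compl_union_floatAfter hPZ hPP hi]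
  simp only [AgreeBefore, inter_eq_inter_iff_forall_mem, Set.mem_union, Set.mem_iUnion,
    Set.mem_Icc, Set.mem_Ico] at hi ⊢
  grind

theorem ltPZ_iff_ssubset {A B : Set α} :
    ltPZ A B N M ↔ N ∩ (A ∪ B)ᶜ = M ∩ (A ∪ B)ᶜ ∧ N ∩ A ⊂ M ∩ A := by
  simp only [ltPZ, lePZ, ssubset_iff_subset_not_subset]
  grind

theorem ltPZ_floatAfter_iff (hPZ : ∀ i ∈ Set.Icc 1 n, Disjoint (P i) Z)
    (hPP : (Set.Icc 1 n).PairwiseDisjoint P) (hi : i ∈ Set.Icc 1 n) :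
    ltPZ (P i) (floatAfter P Z n i) N M ↔ AgreeBefore P Z n i N M ∧ N ∩ P i ⊂ M ∩ P i := by
  rw [ltPZ_iff_ssubset, agreeBefore_iff_inter_compl_eq hPZ hPP hi]

theorem ltPZ_floatAfter_trans_of_lt (hPZ : ∀ i ∈ Set.Icc 1 n, Disjoint (P i) Z)
    (hPP : (Set.Icc 1 n).PairwiseDisjoint P) (hi : i ∈ Set.Icc 1 n) {k : ℕ}
    (hk : k ∈ Set.Icc 1 n) (hik : i < k) {L : Set α}
    (hLN : ltPZ (P i) (floatAfter P Z n i) L N) (hNM : ltPZ (P k) (floatAfter P Z n k) N M) :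
    ltPZ (P i) (floatAfter P Z n i) L M := by
  rw [ltPZ_floatAfter_iff hPZ hPP hi] at hLN ⊢
  obtain ⟨hagree, -⟩ := (ltPZ_floatAfter_iff hPZ hPP hk).1 hNM
  exact ⟨hLN.1.trans (hagree.mono hik.le), hagree.2 i hi hik ▸ hLN.2⟩

theorem lePrio_of_agreeBefore_of_ssubset (hi : i ∈ Set.Icc 1 n) (hagree : AgreeBefore P Z n i N M)
    (hlt : N ∩ P i ⊂ M ∩ P i) : lePrio P Z n N M := by
  refine ⟨hagree.1, fun k hk heq => ?_⟩
  obtain hki | rfl | hik := lt_trichotomy k i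
  · exact (hagree.2 k hk hki).subset
  · exact hlt.subset
  · exact absurd (heq i hi hik) hlt.ne

theorem ltPrio_iff_exists_ssubset :
    ltPrio P Z n N M ↔ ∃ i ∈ Set.Icc 1 n, AgreeBefore P Z n i N M ∧ N ∩ P i ⊂ M ∩ P i := by
  constructor
  · rintro ⟨⟨hfixed, hle⟩, hnot⟩
    obtain ⟨i, hi, heq, hnsub⟩ : ∃ i ∈ Set.Icc 1 n,
        (∀ j ∈ Set.Icc 1 n, j < i → M ∩ P j = N ∩ P j) ∧ ¬ M ∩ P i ⊆ N ∩ P i := by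
      by_contra! hsub
      exact hnot ⟨hfixed.symm, hsub⟩
    have hagree : AgreeBefore P Z n i N M := AgreeBefore.symm ⟨hfixed.symm, heq⟩
    exact ⟨i, hi, hagree, hle i hi hagree.2, hnsub⟩
  · rintro ⟨i, hi, hagree, hlt⟩
    exact ⟨lePrio_of_agreeBefore_of_ssubset hi hagree hlt,
      fun hle => hlt.not_subset (hle.2 i hi hagree.symm.2)⟩

theorem ltPrio_iff_exists_ltPZ (hPZ : ∀ i ∈ Set.Icc 1 n, Disjoint (P i) Z)
    (hPP : (Set.Icc 1 n).PairwiseDisjoint P) :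
    ltPrio P Z n N M ↔ ∃ i ∈ Set.Icc 1 n, ltPZ (P i) (floatAfter P Z n i) N M := by
  rw [ltPrio_iff_exists_ssubset]
  exact exists_congr fun i => and_congr_right fun hi => (ltPZ_floatAfter_iff hPZ hPP hi).symm

end Preference

theorem nestedPrioMods_eq_iterMin (φ : PForm α) (P : ℕ → Set α) (Z : Set α) (n i : ℕ) :
    nestedPrioMods φ P Z n i =
      iterMin (fun j => ltPZ (P j) (floatAfter P Z n j)) {M | φ.sat M} i := by
  induction i with
  | zero => rfl
  | succ i ih => rw [nestedPrioMods, ih]; rfl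

/-- `S` stands for the models of the circumscribed formula, which may itself contain
circumscriptive atoms. -/
theorem prioritized_circumscription_as_nested_general (S : Set (Set α)) (P : ℕ → Set α)
    (Z : Set α) (n : ℕ) (hPZ : ∀ i ∈ Set.Icc 1 n, Disjoint (P i) Z)
    (hPP : (Set.Icc 1 n).PairwiseDisjoint P) (M : Set α) :
    M ∈ iterMin (fun i => ltPZ (P i) (floatAfter P Z n i)) S n ↔
      M ∈ S ∧ ∀ N ∈ S, ¬ ltPrio P Z n N M := by
  have hmin := mem_iterMin_iff (r := fun i => ltPZ (P i) (floatAfter P Z n i)) (S := S) (x := M)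
    fun i hi j hj hij _ _ _ => ltPZ_floatAfter_trans_of_lt hPZ hPP hi hj hij
  simp only [hmin, ltPrio_iff_exists_ltPZ hPZ hPP, not_exists, not_and]
  exact and_congr_right fun _ =>
    ⟨fun h N hN i hi => h i hi N hN, fun h i hi N hN => h N hN i hi⟩

/-- Let `φ` be propositional, `P₁,…,Pₙ` and `Z` pairwise disjoint
sets of atoms, and let `ψ₁ = CIRC(φ; P₁; Z∪P₂∪⋯∪Pₙ)` and
`ψᵢ = CIRC(ψ_{i-1}; Pᵢ; Z∪P_{i+1}∪⋯∪Pₙ)` (`i = 2,…,n`).  Then `M` is a model of `ψₙ`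
iff `M` is a model of `φ` that is minimal w.r.t. the prioritized preference relation
`≤_{P1,…,Pn;Z}`, i.e., no model `M'` of `φ` satisfies `M' <_{P1,…,Pn;Z} M`. -/
theorem prioritized_circumscription_as_nested (φ : PForm α) (P : ℕ → Set α)
    (Z : Set α) (n : ℕ)
    (hPZ : ∀ i ∈ Set.Icc 1 n, Disjoint (P i) Z)
    (hPP : ∀ i ∈ Set.Icc 1 n, ∀ j ∈ Set.Icc 1 n, i ≠ j → Disjoint (P i) (P j)) :
    ∀ M : Set α,
      M ∈ nestedPrioMods φ P Z n n ↔
        (φ.sat M ∧ ∀ M' : Set α, φ.sat M' → ¬ ltPrio P Z n M' M) := by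
  intro M
  rw [nestedPrioMods_eq_iterMin]
  exact prioritized_circumscription_as_nested_general {M | φ.sat M} P Z n hPZ hPP M

end NestedCirc
end
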